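/- If P is a generic collection of n points in Ω°, then the genus of the Ω-tropical curve C(G_P 0_Ω) equals n. -/

import Mathlib

open Set

/-- A tropical monomial `c_{ij} + i·x + j·y`. -/
def mon (c : ℤ × ℤ → ℝ) (ij : ℤ × ℤ) (p : ℝ × ℝ) : ℝ :=
  c ij + (ij.1 : ℝ) * p.1 + (ij.2 : ℝ) * p.2

/-- `f` is an `Ω`-tropical series with support `A` and coefficients `c`:
nonnegative on `Ω`, vanishing on `∂Ω`, and on the interior of `Ω` it equals the
(attained) minimum of the monomials `c_{ij} + i·x + j·y`, `(i,j) ∈ A`. -/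
def IsTropSeriesWith (Ω : Set (ℝ × ℝ)) (A : Set (ℤ × ℤ)) (c : ℤ × ℤ → ℝ)
    (f : ℝ × ℝ → ℝ) : Prop :=
  A.Nonempty ∧ (∀ p ∈ Ω, 0 ≤ f p) ∧ (∀ p ∈ frontier Ω, f p = 0) ∧
    ∀ p ∈ interior Ω, IsLeast ((fun ij => mon c ij p) '' A) (f p)

/-- `f` is an `Ω`-tropical series. -/
def IsOmegaTropical (Ω : Set (ℝ × ℝ)) (f : ℝ × ℝ → ℝ) : Prop :=
  ∃ A c, IsTropSeriesWith Ω A c f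

/-- The tropical curve `C(f)`: points of the interior of `Ω` where `f` is not
smooth. -/
def cornerLocus (Ω : Set (ℝ × ℝ)) (f : ℝ × ℝ → ℝ) : Set (ℝ × ℝ) :=
  {p ∈ interior Ω | ¬ DifferentiableAt ℝ f p}

/-- The operator `G_P`: the pointwise infimum of all `Ω`-tropical series `g ≥ f`
whose tropical curve contains `P`. -/
noncomputable def GP (Ω : Set (ℝ × ℝ)) (P : Set (ℝ × ℝ)) (f : ℝ × ℝ → ℝ) :
    ℝ × ℝ → ℝ :=
  fun p => sInf {y | ∃ g, IsOmegaTropical Ω g ∧ (∀ q ∈ Ω, f q ≤ g q) ∧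
    P ⊆ cornerLocus Ω g ∧ y = g p}

/-- The identically zero function on the plane. -/
def zeroFn : ℝ × ℝ → ℝ := fun _ => 0

/-- The genus of `C(f)`: the number of connected components of
`Ω° \ C(f)` whose closure does not meet `∂Ω`. -/
noncomputable def genus (Ω : Set (ℝ × ℝ)) (f : ℝ × ℝ → ℝ) : ℕ :=
  Set.ncard {U : Set (ℝ × ℝ) |
    (∃ p ∈ interior Ω \ cornerLocus Ω f,
      U = connectedComponentIn (interior Ω \ cornerLocus Ω f) p) ∧
    closure U ∩ frontier Ω = ∅}

/-- Two point configurations give tropical curves of the same combinatorial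
type: some homeomorphism of the plane identifies the curves and the points. -/
def SameCombType (Ω : Set (ℝ × ℝ)) (P Q : Finset (ℝ × ℝ)) : Prop :=
  ∃ h : (ℝ × ℝ) ≃ₜ (ℝ × ℝ),
    h '' cornerLocus Ω (GP Ω ↑P zeroFn) = cornerLocus Ω (GP Ω ↑Q zeroFn) ∧
    h '' (P : Set (ℝ × ℝ)) = (Q : Set (ℝ × ℝ))

/-- `P` is generic: any sufficiently small perturbation of the points of `P`
does not change the combinatorial type of the curve `C(G_P 0_Ω)`. -/
def GenericPts (Ω : Set (ℝ × ℝ)) (P : Finset (ℝ × ℝ)) : Prop :=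
  ∃ ε > 0, ∀ g : ℝ × ℝ → ℝ × ℝ,
    (∀ p ∈ P, dist p (g p) < ε) → SameCombType Ω P (P.image g)

/-!
`G_P 0_Ω` is the lower envelope of all monomials `c a + a·x`, where `c` is the least system of
coefficients that dominates the coefficients of `0_Ω` and for which every point of `P` lies on the
curve. The complement of the curve is the union of the open convex faces on which a single monomial
is minimal. A face whose coefficient is not raised above that of `0_Ω` reaches `∂Ω`. A raised face
does not, because near any boundary point some unraised monomial, taken from the infinitely many
whose slope is almost an inner normal, is smaller. So the genus is the number of raised slopes
with a nonempty face.

Upper bound: by minimality of `c`, no set of raised coefficients can be lowered together, so each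
such set `S` has a point of `P` at which exactly one slope of `S` is minimal. Removing slopes and
points in pairs gives at most `|P|` raised slopes.

Lower bound: every point of `P` lies on an equality of two monomials with nonempty faces. If fewer
than `|P|` of them were raised, then the coefficients of `0_Ω`, perturbed in fewer than `|P|`
coordinates, would satisfy `|P|` equations, one at each point, which fails for almost every
configuration. Genericity allows us to move to such a configuration, since the genus counts the
bounded components of the complement of the curve in the plane, a topological invariant.
-/

namespace OmegaTropical

open Filter Topology MeasureTheory

variable {Ω : Set (ℝ × ℝ)} {c c' : ℤ × ℤ → ℝ} {a b : ℤ × ℤ} {p q x : ℝ × ℝ} {f g : ℝ × ℝ → ℝ}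
  {P : Set (ℝ × ℝ)}

/-! ### Monomials and their least coefficients -/

/-- The linear form `(x, y) ↦ i·x + j·y` with integer slope `(i, j)`. -/
noncomputable def slopeForm (a : ℤ × ℤ) : StrongDual ℝ (ℝ × ℝ) :=
  (a.1 : ℝ) • ContinuousLinearMap.fst ℝ ℝ ℝ + (a.2 : ℝ) • ContinuousLinearMap.snd ℝ ℝ ℝ

theorem slopeForm_apply (a : ℤ × ℤ) (x : ℝ × ℝ) : slopeForm a x = a.1 * x.1 + a.2 * x.2 := rfl

theorem slopeForm_injective : Function.Injective slopeForm := fun a b h ↦ by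
  have h₁ := DFunLike.congr_fun h (1, 0)
  have h₂ := DFunLike.congr_fun h (0, 1)
  simp only [slopeForm_apply, mul_one, mul_zero, add_zero, zero_add, Int.cast_inj] at h₁ h₂
  exact Prod.ext h₁ h₂

theorem mon_eq_add_slopeForm (c : ℤ × ℤ → ℝ) (a : ℤ × ℤ) (x : ℝ × ℝ) :
    mon c a x = c a + slopeForm a x := by
  rw [mon, slopeForm_apply, add_assoc]

theorem hasFDerivAt_mon (c : ℤ × ℤ → ℝ) (a : ℤ × ℤ) (x : ℝ × ℝ) :
    HasFDerivAt (mon c a) (slopeForm a) x := by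
  simpa only [funext (mon_eq_add_slopeForm c a)] using (slopeForm a).hasFDerivAt.const_add (c a)

theorem continuous_mon (c : ℤ × ℤ → ℝ) (a : ℤ × ℤ) : Continuous (mon c a) := by
  unfold mon
  fun_prop

theorem mon_add (c : ℤ × ℤ → ℝ) (a : ℤ × ℤ) (x v : ℝ × ℝ) :
    mon c a (x + v) = mon c a x + slopeForm a v := by
  simp only [mon_eq_add_slopeForm, map_add, add_assoc]

theorem mon_smul_add_smul (c : ℤ × ℤ → ℝ) (a : ℤ × ℤ) (x y : ℝ × ℝ) {s t : ℝ} (h : s + t = 1) :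
    mon c a (s • x + t • y) = s * mon c a x + t * mon c a y := by
  simp only [mon_eq_add_slopeForm, map_add, map_smul, smul_eq_mul]
  linear_combination -c a * h

theorem mon_le_mon (h : c a ≤ c' a) (x : ℝ × ℝ) : mon c a x ≤ mon c' a x := by
  simpa only [mon_eq_add_slopeForm, add_le_add_iff_right] using h

/-- The least coefficient of the monomial of slope `a` for which it dominates `f` on `Ω`. -/
noncomputable def majorantCoeff (Ω : Set (ℝ × ℝ)) (f : ℝ × ℝ → ℝ) (a : ℤ × ℤ) : ℝ :=
  sSup ((fun x ↦ f x - slopeForm a x) '' Ω)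

section majorantCoeff

variable (hΩ : IsCompact Ω) (hne : Ω.Nonempty) (hf : ContinuousOn f Ω)
include hΩ hne hf

theorem isGreatest_majorantCoeff (a : ℤ × ℤ) :
    IsGreatest ((fun x ↦ f x - slopeForm a x) '' Ω) (majorantCoeff Ω f a) :=
  (hΩ.image_of_continuousOn (by fun_prop)).isGreatest_sSup (hne.image _)

theorem majorantCoeff_le_iff : majorantCoeff Ω f a ≤ c a ↔ ∀ x ∈ Ω, f x ≤ mon c a x := by
  simp only [isLUB_le_iff (isGreatest_majorantCoeff hΩ hne hf a).isLUB, mem_upperBounds,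
    forall_mem_image, mon_eq_add_slopeForm, sub_le_iff_le_add]

theorem le_mon_majorantCoeff (a : ℤ × ℤ) (hx : x ∈ Ω) : f x ≤ mon (majorantCoeff Ω f) a x :=
  (majorantCoeff_le_iff hΩ hne hf).1 le_rfl x hx

theorem exists_mon_majorantCoeff_eq (a : ℤ × ℤ) :
    ∃ x ∈ Ω, mon (majorantCoeff Ω f) a x = f x := by
  obtain ⟨x, hx, h⟩ := (isGreatest_majorantCoeff hΩ hne hf a).1
  exact ⟨x, hx, by rw [mon_eq_add_slopeForm, ← h, sub_add_cancel]⟩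

end majorantCoeff

/-- The coefficients of the series `0_Ω`: those monomials which touch `0` from above on `Ω`. -/
noncomputable def supportCoeff (Ω : Set (ℝ × ℝ)) : ℤ × ℤ → ℝ :=
  majorantCoeff Ω 0

theorem supportCoeff_le_iff (hΩ : IsCompact Ω) (hne : Ω.Nonempty) :
    supportCoeff Ω a ≤ c a ↔ ∀ x ∈ Ω, 0 ≤ mon c a x :=
  majorantCoeff_le_iff hΩ hne continuousOn_const

theorem mon_nonneg (hΩ : IsCompact Ω) (hc : supportCoeff Ω a ≤ c a) (hx : x ∈ Ω) :
    0 ≤ mon c a x :=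
  (supportCoeff_le_iff hΩ ⟨x, hx⟩).1 hc x hx

theorem exists_mon_supportCoeff_eq_zero (hΩ : IsCompact Ω) (hne : Ω.Nonempty) (a : ℤ × ℤ) :
    ∃ x ∈ Ω, mon (supportCoeff Ω) a x = 0 :=
  exists_mon_majorantCoeff_eq hΩ hne continuousOn_const a

/-- Move from `x` a distance `r` against the signs of `a`: a monomial that is nonnegative there is
large at `x`. -/
theorem mul_norm_le_mon {r : ℝ} (hr : 0 ≤ r) (h : ∀ y ∈ Metric.closedBall x r, 0 ≤ mon c a y) :
    r * ‖a‖ ≤ mon c a x := by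
  have abs_sign_le (t : ℝ) : |(SignType.sign t : ℝ)| ≤ 1 := by
    obtain h | h | h := lt_trichotomy t 0 <;> simp [h]
  let v : ℝ × ℝ := (SignType.sign (a.1 : ℝ), SignType.sign (a.2 : ℝ))
  have hv : ‖v‖ ≤ 1 := max_le (abs_sign_le _) (abs_sign_le _)
  have hy : x + (-r) • v ∈ Metric.closedBall x r := by
    simpa [norm_smul, abs_of_nonneg hr] using mul_le_of_le_one_right hr hv
  have hnorm : ‖a‖ ≤ slopeForm a v := by
    rw [slopeForm_apply, self_mul_sign, self_mul_sign, Prod.norm_def, Int.norm_eq_abs,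
      Int.norm_eq_abs]
    exact max_le_add_of_nonneg (abs_nonneg _) (abs_nonneg _)
  have hmon := h _ hy
  rw [mon_add, map_smul, smul_eq_mul] at hmon
  linarith [mul_le_mul_of_nonneg_left hnorm hr]

theorem tendsto_mon_cofinite_prod_nhds (hΩ : IsCompact Ω) (hc : supportCoeff Ω ≤ c)
    (hp : p ∈ interior Ω) :
    Tendsto (fun z : (ℤ × ℤ) × (ℝ × ℝ) ↦ mon c z.1 z.2) (cofinite ×ˢ 𝓝 p) atTop := by
  obtain ⟨r, hr, hball⟩ := Metric.nhds_basis_closedBall.mem_iff.1 (mem_interior_iff_mem_nhds.1 hp)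
  have hlower : ∀ᶠ z : (ℤ × ℤ) × (ℝ × ℝ) in cofinite ×ˢ 𝓝 p, r / 2 * ‖z.1‖ ≤ mon c z.1 z.2 := by
    filter_upwards [tendsto_snd.eventually (Metric.closedBall_mem_nhds p (half_pos hr))]
      with z hz
    refine mul_norm_le_mon (half_pos hr).le fun y hy ↦ mon_nonneg hΩ (hc _) (hball ?_)
    rw [Metric.mem_closedBall] at hy ⊢
    linarith [dist_triangle y z.2 p]
  have hnorm : Tendsto (fun a : ℤ × ℤ ↦ ‖a‖) cofinite atTop := by
    simpa only [cocompact_eq_cofinite] using tendsto_norm_cocompact_atTop (E := ℤ × ℤ)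
  exact tendsto_atTop_mono' _ hlower
    ((hnorm.comp tendsto_fst).const_mul_atTop (half_pos hr))

theorem tendsto_mon_cofinite (hΩ : IsCompact Ω) (hc : supportCoeff Ω ≤ c) (hp : p ∈ interior Ω) :
    Tendsto (fun a ↦ mon c a p) cofinite atTop :=
  (tendsto_mon_cofinite_prod_nhds hΩ hc hp).comp
    (tendsto_id.prodMk (tendsto_const_nhds (x := p)))

/-! ### Active slopes and faces -/

/-- The slopes of the monomials that attain the minimum of the series at `p`. -/
def active (c : ℤ × ℤ → ℝ) (p : ℝ × ℝ) : Set (ℤ × ℤ) :=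
  {a | ∀ b, mon c a p ≤ mon c b p}

theorem mon_eq_of_mem_active (ha : a ∈ active c p) (hb : b ∈ active c p) :
    mon c a p = mon c b p :=
  (ha b).antisymm (hb a)

theorem mon_lt_of_notMem_active (ha : a ∈ active c p) (hb : b ∉ active c p) :
    mon c a p < mon c b p := by
  simp only [active, mem_ofPred_eq, not_forall, not_le] at hb
  obtain ⟨d, hd⟩ := hb
  exact (ha d).trans_lt hd

theorem active_eq_singleton_iff : active c p = {a} ↔ ∀ b ≠ a, mon c a p < mon c b p := by
  refine ⟨fun h b hb ↦ mon_lt_of_notMem_active (h ▸ mem_singleton a) (by rwa [h]), fun h ↦ ?_⟩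
  refine eq_singleton_iff_unique_mem.2 ⟨fun b ↦ ?_, fun b hb ↦ ?_⟩
  · obtain rfl | hb := eq_or_ne b a
    exacts [le_rfl, (h b hb).le]
  · by_contra hba
    exact (h b hba).not_ge (hb a)

/-- The open face of slope `a`: the region where the monomial of slope `a` is the only minimal
one. -/
def face (Ω : Set (ℝ × ℝ)) (c : ℤ × ℤ → ℝ) (a : ℤ × ℤ) : Set (ℝ × ℝ) :=
  {x ∈ interior Ω | active c x = {a}}

theorem eq_of_mem_face (ha : x ∈ face Ω c a) (hb : x ∈ face Ω c b) : a = b :=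
  singleton_injective (ha.2.symm.trans hb.2)

theorem mem_active_of_mem_face (hx : x ∈ face Ω c a) : a ∈ active c x :=
  hx.2 ▸ mem_singleton a

theorem mon_lt_of_mem_face (hx : x ∈ face Ω c a) (hb : b ≠ a) : mon c a x < mon c b x :=
  active_eq_singleton_iff.1 hx.2 b hb

theorem smul_add_smul_mem_face {s t : ℝ} (hs : 0 < s) (ht : 0 ≤ t) (hst : s + t = 1)
    (hx : x ∈ face Ω c a) (hq : a ∈ active c q) (hint : s • x + t • q ∈ interior Ω) :
    s • x + t • q ∈ face Ω c a := by
  refine ⟨hint, active_eq_singleton_iff.2 fun b hb ↦ ?_⟩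
  rw [mon_smul_add_smul _ _ _ _ hst, mon_smul_add_smul _ _ _ _ hst]
  exact add_lt_add_of_lt_of_le (mul_lt_mul_of_pos_left (mon_lt_of_mem_face hx hb) hs)
    (mul_le_mul_of_nonneg_left (hq b) ht)

theorem convex_face (hconv : Convex ℝ Ω) (c : ℤ × ℤ → ℝ) (a : ℤ × ℤ) : Convex ℝ (face Ω c a) :=
  convex_iff_forall_pos.2 fun _ hx _ hy _ _ hs ht hst ↦
    smul_add_smul_mem_face hs ht.le hst hx (mem_active_of_mem_face hy)
      (hconv.interior hx.1 hy.1 hs.le ht.le hst)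

section local_finiteness

variable (hΩ : IsCompact Ω) (hc : supportCoeff Ω ≤ c) (hp : p ∈ interior Ω)
include hΩ hc hp

theorem active_nonempty : (active c p).Nonempty :=
  (tendsto_mon_cofinite hΩ hc hp).exists_forall_le

theorem active_finite : (active c p).Finite :=
  (((tendsto_mon_cofinite hΩ hc hp).eventually_gt_atTop (mon c 0 p))).subset
    fun _ ha ↦ (ha 0).not_gt

theorem exists_pos_forall_add_le_mon :
    ∃ δ > 0, ∀ a ∈ active c p, ∀ b ∉ active c p, mon c a p + δ ≤ mon c b p := by
  obtain ⟨a₀, ha₀⟩ := active_nonempty hΩ hc hp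
  obtain ⟨b₀, hb₀, hmin⟩ := (tendsto_mon_cofinite hΩ hc hp).exists_within_forall_le
    (active_finite hΩ hc hp).infinite_compl.nonempty
  refine ⟨mon c b₀ p - mon c a₀ p, sub_pos.2 (mon_lt_of_notMem_active ha₀ hb₀), fun a ha b hb ↦ ?_⟩
  rw [mon_eq_of_mem_active ha ha₀, add_sub_cancel]
  exact hmin b hb

theorem eventually_active_subset : ∀ᶠ x in 𝓝 p, active c x ⊆ active c p := by
  obtain ⟨a, ha⟩ := active_nonempty hΩ hc hp
  have hlt : ∀ b ∉ active c p, ∀ᶠ x in 𝓝 p, mon c a x < mon c b x := fun b hb ↦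
    (continuous_mon c a).continuousAt.eventually_lt (continuous_mon c b).continuousAt
      (mon_lt_of_notMem_active ha hb)
  obtain ⟨far, hfar, near, hnear, hmon⟩ := eventually_prod_iff.1
    ((tendsto_mon_cofinite_prod_nhds hΩ hc hp).eventually_ge_atTop (mon c a p + 1))
  have hfin : {b | b ∉ active c p ∧ ¬ far b}.Finite := (eventually_cofinite.1 hfar).inter_of_right _
  filter_upwards [hnear, (hfin.eventually_all (l := 𝓝 p)).2 fun b hb ↦ hlt b hb.1,
    (continuous_mon c a).continuousAt.eventually_lt_const (lt_add_one (mon c a p))]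
    with x hx hclose hax b hb
  by_contra hbp
  by_cases hfb : far b
  · exact (hb a).not_gt (hax.trans_le (hmon hfb hx))
  · exact (hb a).not_gt (hclose b ⟨hbp, hfb⟩)

theorem exists_mem_face_or_nontrivial_active :
    (∃ a, p ∈ face Ω c a) ∨ (active c p).Nontrivial :=
  (active_nonempty hΩ hc hp).exists_eq_singleton_or_nontrivial.imp_left fun ⟨a, ha⟩ ↦ ⟨a, hp, ha⟩

/-- Leave `p` along `v`. -/
theorem face_nonempty_of_forall_slopeForm_lt {v : ℝ × ℝ} (ha : a ∈ active c p)
    (hv : ∀ b ∈ active c p, b ≠ a → slopeForm a v < slopeForm b v) : (face Ω c a).Nonempty := by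
  have hray : Tendsto (fun t : ℝ ↦ p + t • v) (𝓝[>] 0) (𝓝 p) :=
    (Continuous.tendsto' (by fun_prop) _ _ (by simp)).mono_left nhdsWithin_le_nhds
  obtain ⟨t, hsub, hint, ht⟩ := ((hray.eventually (eventually_active_subset hΩ hc hp)).and
    ((hray.eventually (isOpen_interior.mem_nhds hp)).and self_mem_nhdsWithin)).exists
  have hunique : ∀ b ∈ active c (p + t • v), b = a := fun b hb ↦ by
    by_contra hba
    have hle := hb a
    rw [mon_add, mon_add, map_smul, map_smul, mon_eq_of_mem_active (hsub hb) ha] at hle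
    exact (mul_lt_mul_of_pos_left (hv b (hsub hb) hba) ht).not_ge (le_of_add_le_add_left hle)
  exact ⟨_, hint, (active_nonempty hΩ hc hint).subset_singleton_iff.1 hunique⟩

end local_finiteness

theorem isOpen_face (hΩ : IsCompact Ω) (hc : supportCoeff Ω ≤ c) (a : ℤ × ℤ) :
    IsOpen (face Ω c a) := by
  rw [isOpen_iff_mem_nhds]
  rintro p ⟨hp, ha⟩
  filter_upwards [isOpen_interior.mem_nhds hp, eventually_active_subset hΩ hc hp] with x hx hsub
  exact ⟨hx, (active_nonempty hΩ hc hx).subset_singleton_iff.1 (ha ▸ hsub)⟩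

/-! ### The curve of a lower envelope -/

/-- On the interior of `Ω`, the series `f` is the attained minimum of the monomials of all slopes
with coefficients `c`. -/
def IsLowerEnvelope (Ω : Set (ℝ × ℝ)) (c : ℤ × ℤ → ℝ) (f : ℝ × ℝ → ℝ) : Prop :=
  ∀ x ∈ interior Ω, IsLeast (range fun a ↦ mon c a x) (f x)

namespace IsLowerEnvelope

theorem le_mon (hf : IsLowerEnvelope Ω c f) (hx : x ∈ interior Ω) (a : ℤ × ℤ) :
    f x ≤ mon c a x :=
  (hf x hx).2 (mem_range_self a)

theorem eq_mon (hf : IsLowerEnvelope Ω c f) (hx : x ∈ interior Ω) (ha : a ∈ active c x) :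
    f x = mon c a x :=
  (hf x hx).unique ⟨mem_range_self a, forall_mem_range.2 ha⟩

/-- At a point of differentiability, `f - mon c a` has a local maximum for every active `a`. -/
theorem fderiv_eq_slopeForm (hf : IsLowerEnvelope Ω c f) (hp : p ∈ interior Ω)
    (hd : DifferentiableAt ℝ f p) (ha : a ∈ active c p) : fderiv ℝ f p = slopeForm a := by
  have hmax : IsLocalMax (f - mon c a) p := by
    filter_upwards [isOpen_interior.mem_nhds hp] with x hx
    simpa [hf.eq_mon hp ha] using hf.le_mon hx a
  exact sub_eq_zero.1 (hmax.hasFDerivAt_eq_zero (hd.hasFDerivAt.sub (hasFDerivAt_mon c a p)))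

theorem differentiableAt_of_mem_face (hΩ : IsCompact Ω) (hc : supportCoeff Ω ≤ c)
    (hf : IsLowerEnvelope Ω c f) (hp : p ∈ face Ω c a) : DifferentiableAt ℝ f p := by
  have heq : f =ᶠ[𝓝 p] mon c a := by
    filter_upwards [(isOpen_face hΩ hc a).mem_nhds hp] with x hx
    exact hf.eq_mon hx.1 (mem_active_of_mem_face hx)
  exact ((hasFDerivAt_mon c a p).congr_of_eventuallyEq heq).differentiableAt

theorem mem_cornerLocus_iff (hΩ : IsCompact Ω) (hc : supportCoeff Ω ≤ c)
    (hf : IsLowerEnvelope Ω c f) (hp : p ∈ interior Ω) :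
    p ∈ cornerLocus Ω f ↔ (active c p).Nontrivial := by
  refine ⟨fun h ↦ ?_, fun ⟨a, ha, b, hb, hab⟩ ↦ ⟨hp, fun hd ↦ hab (slopeForm_injective ?_)⟩⟩
  · refine (exists_mem_face_or_nontrivial_active hΩ hc hp).resolve_left fun ⟨a, ha⟩ ↦ ?_
    exact h.2 (hf.differentiableAt_of_mem_face hΩ hc ha)
  · rw [← hf.fderiv_eq_slopeForm hp hd ha, hf.fderiv_eq_slopeForm hp hd hb]

theorem interior_diff_cornerLocus (hΩ : IsCompact Ω) (hc : supportCoeff Ω ≤ c)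
    (hf : IsLowerEnvelope Ω c f) : interior Ω \ cornerLocus Ω f = ⋃ a, face Ω c a := by
  ext p
  rw [Set.mem_sdiff, mem_iUnion]
  refine ⟨fun ⟨hp, hpf⟩ ↦ ?_, fun ⟨a, ha⟩ ↦ ⟨ha.1, fun h ↦ ?_⟩⟩
  · rw [hf.mem_cornerLocus_iff hΩ hc hp] at hpf
    exact (exists_mem_face_or_nontrivial_active hΩ hc hp).resolve_right hpf
  · exact h.2 (hf.differentiableAt_of_mem_face hΩ hc ha)

end IsLowerEnvelope

theorem connectedComponentIn_eq_of_isOpen {X : Type*} [TopologicalSpace X] {U T : Set X} {x : X}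
    (hU : IsOpen U) (hconn : IsPreconnected U) (hUT : U ⊆ T) (hclosed : closure U ∩ T ⊆ U)
    (hx : x ∈ U) : connectedComponentIn T x = U := by
  refine (isPreconnected_connectedComponentIn.subset_left_of_subset_union hU
    isClosed_closure.isOpen_compl (disjoint_compl_right.mono_left subset_closure) ?_
    ⟨x, mem_connectedComponentIn (hUT hx), hx⟩).antisymm
    (hconn.subset_connectedComponentIn hx hUT)
  intro y hy
  by_cases hyU : y ∈ closure U
  · exact .inl (hclosed ⟨hyU, connectedComponentIn_subset T x hy⟩)
  · exact .inr hyU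

theorem IsLowerEnvelope.connectedComponentIn_eq_face (hconv : Convex ℝ Ω) (hΩ : IsCompact Ω)
    (hc : supportCoeff Ω ≤ c) (hf : IsLowerEnvelope Ω c f) (hp : p ∈ face Ω c a) :
    connectedComponentIn (interior Ω \ cornerLocus Ω f) p = face Ω c a := by
  rw [hf.interior_diff_cornerLocus hΩ hc]
  refine connectedComponentIn_eq_of_isOpen (isOpen_face hΩ hc a)
    (convex_face hconv c a).isPreconnected (subset_iUnion _ a) ?_ hp
  rintro y ⟨hya, hy⟩
  obtain ⟨b, hb⟩ := mem_iUnion.1 hy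
  obtain ⟨z, hzb, hza⟩ := mem_closure_iff.1 hya _ (isOpen_face hΩ hc b) hb
  rwa [eq_of_mem_face hza hzb]

/-! ### The least admissible coefficients -/

/-- The coefficients of the `Ω`-tropical series whose curve contains `P`, see
`OmegaTropical.IsLowerEnvelope.mem_cornerLocus_iff`. -/
def admissibleCoeffs (Ω P : Set (ℝ × ℝ)) : Set (ℤ × ℤ → ℝ) :=
  {c | supportCoeff Ω ≤ c ∧ ∀ p ∈ P, (active c p).Nontrivial}

theorem mem_active_majorantCoeff (hΩ : IsCompact Ω) (hf : ContinuousOn f Ω) (hp : p ∈ Ω)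
    (h : ∀ x ∈ Ω, f x ≤ f p + slopeForm a (x - p)) : a ∈ active (majorantCoeff Ω f) p := by
  intro b
  have hle : majorantCoeff Ω f a ≤ f p - slopeForm a p :=
    (majorantCoeff_le_iff (c := fun _ ↦ f p - slopeForm a p) hΩ ⟨p, hp⟩ hf).2 fun x hx ↦ by
      rw [mon_eq_add_slopeForm]
      linarith [h x hx, map_sub (slopeForm a) x p]
  refine le_trans ?_ (le_mon_majorantCoeff hΩ ⟨p, hp⟩ hf b hp)
  rwa [mon_eq_add_slopeForm, ← le_sub_iff_add_le]

/-- A concave piecewise linear function that bends along the vertical line through each point of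
`P`. -/
noncomputable def verticalFold (P : Finset (ℝ × ℝ)) (x : ℝ × ℝ) : ℝ :=
  -∑ q ∈ P, max 0 (x.1 - q.1)

theorem continuous_verticalFold (P : Finset (ℝ × ℝ)) : Continuous (verticalFold P) := by
  unfold verticalFold
  fun_prop

theorem verticalFold_le {P : Finset (ℝ × ℝ)} {s : ℝ × ℝ → ℤ} (x : ℝ × ℝ)
    (hs : ∀ q ∈ P, s q = 0 ∧ p.1 ≤ q.1 ∨ s q = 1 ∧ q.1 ≤ p.1) :
    verticalFold P x ≤ verticalFold P p + slopeForm (-∑ q ∈ P, s q, 0) (x - p) := by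
  have hterm : ∀ q ∈ P, max 0 (p.1 - q.1) + s q * (x.1 - p.1) ≤ max 0 (x.1 - q.1) := fun q hq ↦ by
    obtain ⟨hs, hle⟩ | ⟨hs, hle⟩ := hs q hq
    · rw [hs, max_eq_left (sub_nonpos.2 hle), Int.cast_zero, zero_mul, add_zero]
      exact le_max_left _ _
    · rw [hs, max_eq_right (sub_nonneg.2 hle), Int.cast_one, one_mul, add_comm,
        sub_add_sub_cancel]
      exact le_max_right _ _
  have hsum := Finset.sum_le_sum hterm
  rw [Finset.sum_add_distrib, ← Finset.sum_mul] at hsum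
  simp only [verticalFold, slopeForm_apply, Prod.fst_sub, Int.cast_neg, Int.cast_sum,
    Int.cast_zero, zero_mul, add_zero]
  linarith

theorem admissibleCoeffs_nonempty (hΩ : IsCompact Ω) (hne : Ω.Nonempty) {P : Finset (ℝ × ℝ)}
    (hP : ↑P ⊆ Ω) : (admissibleCoeffs Ω P).Nonempty := by
  obtain ⟨m, hm⟩ := (hΩ.image (continuous_verticalFold P)).bddBelow
  have hcont : Continuous fun x ↦ verticalFold P x - m :=
    (continuous_verticalFold P).sub continuous_const
  refine ⟨majorantCoeff Ω fun x ↦ verticalFold P x - m, fun a ↦ ?_, fun p hp ↦ ?_⟩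
  · refine (supportCoeff_le_iff hΩ hne).2 fun x hx ↦ ?_
    exact (sub_nonneg.2 (hm (mem_image_of_mem _ hx))).trans
      (le_mon_majorantCoeff hΩ hne hcont.continuousOn a hx)
  · have hactive (s : ℝ × ℝ → ℤ) (hs : ∀ q ∈ P, s q = 0 ∧ p.1 ≤ q.1 ∨ s q = 1 ∧ q.1 ≤ p.1) :
        (-∑ q ∈ P, s q, 0) ∈ active (majorantCoeff Ω fun x ↦ verticalFold P x - m) p :=
      mem_active_majorantCoeff hΩ hcont.continuousOn (hP hp) fun x _ ↦ by
        linarith [verticalFold_le x hs]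
    refine ⟨_, hactive (fun q ↦ if q.1 ≤ p.1 then 1 else 0) fun q _ ↦ ?_,
      _, hactive (fun q ↦ if q.1 < p.1 then 1 else 0) fun q _ ↦ ?_, fun h ↦ ?_⟩
    · grind
    · grind
    · have hlt : ∑ q ∈ P, (if q.1 < p.1 then 1 else 0 : ℤ) < ∑ q ∈ P, if q.1 ≤ p.1 then 1 else 0 :=
        Finset.sum_lt_sum (fun q _ ↦ by grind) ⟨p, hp, by simp⟩
      exact hlt.ne' (neg_injective (congrArg Prod.fst h))

theorem exists_isLeast_admissibleCoeffs (hΩ : IsCompact Ω) (hne : Ω.Nonempty)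
    {P : Finset (ℝ × ℝ)} (hP : ↑P ⊆ interior Ω) : ∃ c, IsLeast (admissibleCoeffs Ω P) c := by
  have hnonempty := admissibleCoeffs_nonempty hΩ hne (hP.trans interior_subset)
  have hglb := isGLB_csInf hnonempty ⟨supportCoeff Ω, fun c hc ↦ hc.1⟩
  set c := sInf (admissibleCoeffs Ω P)
  have hc : supportCoeff Ω ≤ c := hglb.2 fun c' hc' ↦ hc'.1
  refine ⟨c, ⟨hc, fun p hp ↦ ?_⟩, hglb.1⟩
  refine (exists_mem_face_or_nontrivial_active hΩ hc (hP hp)).resolve_left fun ⟨a, _, ha⟩ ↦ ?_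
  obtain ⟨δ, hδ, hgap⟩ := exists_pos_forall_add_le_mon hΩ hc (hP hp)
  obtain ⟨_, ⟨c', hc', rfl⟩, -, hlt⟩ :=
    (isGLB_pi.1 hglb a).exists_between (lt_add_of_pos_right (c a) hδ)
  have hunique : ∀ b ∈ active c' p, b = a := fun b hb ↦ by
    by_contra hba
    refine (hb a).not_gt (lt_of_lt_of_le ?_ (mon_le_mon (hglb.1 hc' b) p))
    refine lt_of_lt_of_le ?_ (hgap a (ha ▸ mem_singleton a) b (by rwa [ha]))
    rw [mon_eq_add_slopeForm, mon_eq_add_slopeForm]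
    simp only [Function.eval] at hlt
    linarith
  obtain ⟨b, hb, d, hd, hbd⟩ := hc'.2 p hp
  exact hbd ((hunique b hb).trans (hunique d hd).symm)

/-! ### `G_P 0_Ω` as a lower envelope -/

/-- The lower envelope of all the monomials with coefficients `c`, extended by `0` outside the
interior of `Ω`. -/
noncomputable def lowerEnvelope (Ω : Set (ℝ × ℝ)) (c : ℤ × ℤ → ℝ) : ℝ × ℝ → ℝ :=
  (interior Ω).indicator fun x ↦ ⨅ a, mon c a x

theorem isLowerEnvelope_lowerEnvelope (hΩ : IsCompact Ω) (hc : supportCoeff Ω ≤ c) :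
    IsLowerEnvelope Ω c (lowerEnvelope Ω c) := fun x hx ↦ by
  obtain ⟨a, ha⟩ := active_nonempty hΩ hc hx
  rw [lowerEnvelope, indicator_of_mem hx]
  have hleast : IsLeast (range fun a ↦ mon c a x) (mon c a x) :=
    ⟨mem_range_self a, forall_mem_range.2 ha⟩
  rwa [iInf, hleast.csInf_eq]

theorem lowerEnvelope_nonneg (hΩ : IsCompact Ω) (hc : supportCoeff Ω ≤ c) (x : ℝ × ℝ) :
    0 ≤ lowerEnvelope Ω c x :=
  indicator_nonneg (fun _ hy ↦ Real.iInf_nonneg fun _ ↦ mon_nonneg hΩ (hc _)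
    (interior_subset hy)) x

theorem isOmegaTropical_lowerEnvelope (hΩ : IsCompact Ω) (hc : supportCoeff Ω ≤ c) :
    IsOmegaTropical Ω (lowerEnvelope Ω c) :=
  ⟨univ, c, univ_nonempty, fun x _ ↦ lowerEnvelope_nonneg hΩ hc x,
    fun _ hx ↦ indicator_of_notMem hx.2 _,
    fun x hx ↦ by simpa only [image_univ] using isLowerEnvelope_lowerEnvelope hΩ hc x hx⟩

/-- Monomials outside the support of `g` may be added with the least coefficients for which they
dominate a fixed monomial of `g`. -/
theorem exists_isLowerEnvelope_of_isOmegaTropical (hconv : Convex ℝ Ω) (hΩ : IsCompact Ω)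
    (hint : (interior Ω).Nonempty) (hg : IsOmegaTropical Ω g) :
    ∃ c, supportCoeff Ω ≤ c ∧ IsLowerEnvelope Ω c g := by
  classical
  obtain ⟨A, k, ⟨a₀, ha₀⟩, hnonneg, -, hmin⟩ := hg
  have hne : Ω.Nonempty := hint.mono interior_subset
  let c := A.piecewise k (majorantCoeff Ω (mon k a₀))
  have hcA (x : ℝ × ℝ) {a : ℤ × ℤ} (ha : a ∈ A) : mon c a x = mon k a x := by
    simp only [mon, c, piecewise_eq_of_mem _ _ _ ha]
  have hcAc (x : ℝ × ℝ) {a : ℤ × ℤ} (ha : a ∉ A) :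
      mon c a x = mon (majorantCoeff Ω (mon k a₀)) a x := by
    simp only [mon, c, piecewise_eq_of_notMem _ _ _ ha]
  have hle : ∀ x ∈ interior Ω, ∀ a, g x ≤ mon c a x := fun x hx a ↦ by
    have hgA : ∀ b ∈ A, g x ≤ mon k b x := forall_mem_image.1 (hmin x hx).2
    by_cases ha : a ∈ A
    · rw [hcA x ha]
      exact hgA a ha
    · rw [hcAc x ha]
      exact (hgA a₀ ha₀).trans
        (le_mon_majorantCoeff hΩ hne (continuous_mon k a₀).continuousOn a (interior_subset hx))
  refine ⟨c, fun a ↦ (supportCoeff_le_iff hΩ hne).2 fun x hx ↦ ?_,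
    fun x hx ↦ ⟨?_, forall_mem_range.2 (hle x hx)⟩⟩
  · have hx' : x ∈ closure (interior Ω) := by
      rw [hconv.closure_interior_eq_closure_of_nonempty_interior hint]
      exact subset_closure hx
    exact closure_minimal (fun y hy ↦ (hnonneg y (interior_subset hy)).trans (hle y hy a))
      (isClosed_le continuous_const (continuous_mon c a)) hx'
  · obtain ⟨a, ha, hax⟩ := (hmin x hx).1
    exact ⟨a, (hcA x ha).trans hax⟩

theorem isLowerEnvelope_GP (hconv : Convex ℝ Ω) (hΩ : IsCompact Ω) (hint : (interior Ω).Nonempty)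
    (hP : P ⊆ interior Ω) (hc : IsLeast (admissibleCoeffs Ω P) c) :
    IsLowerEnvelope Ω c (GP Ω P zeroFn) := by
  have henv := isLowerEnvelope_lowerEnvelope hΩ hc.1.1
  intro x hx
  suffices hGP : GP Ω P zeroFn x = lowerEnvelope Ω c x from hGP ▸ henv x hx
  refine IsLeast.csInf_eq ⟨⟨_, isOmegaTropical_lowerEnvelope hΩ hc.1.1,
    fun q _ ↦ lowerEnvelope_nonneg hΩ hc.1.1 q, fun p hp ↦ ?_, rfl⟩, ?_⟩
  · exact (henv.mem_cornerLocus_iff hΩ hc.1.1 (hP hp)).2 (hc.1.2 p hp)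
  · rintro _ ⟨g, hg, -, hPg, rfl⟩
    obtain ⟨c', hc', hmin⟩ := exists_isLowerEnvelope_of_isOmegaTropical hconv hΩ hint hg
    have hadm : c' ∈ admissibleCoeffs Ω P :=
      ⟨hc', fun p hp ↦ (hmin.mem_cornerLocus_iff hΩ hc' (hP hp)).1 (hPg hp)⟩
    obtain ⟨a, ha⟩ := (hmin x hx).1
    exact (henv.le_mon hx a).trans ((mon_le_mon (hc.2 hadm a) x).trans_eq ha)

/-! ### Counting the raised coefficients -/

/-- The coefficients `c`, lowered by `t` on the set of slopes `S`. -/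
noncomputable def lowerCoeffs (c : ℤ × ℤ → ℝ) (S : Set (ℤ × ℤ)) (t : ℝ) : ℤ × ℤ → ℝ :=
  c - S.indicator fun _ ↦ t

section lowerCoeffs

variable {S : Set (ℤ × ℤ)} {t : ℝ}

theorem mon_lowerCoeffs_of_mem (ha : a ∈ S) (x : ℝ × ℝ) :
    mon (lowerCoeffs c S t) a x = mon c a x - t := by
  simp only [mon, lowerCoeffs, Pi.sub_apply, indicator_of_mem ha]
  ring

theorem mon_lowerCoeffs_of_notMem (ha : a ∉ S) (x : ℝ × ℝ) :
    mon (lowerCoeffs c S t) a x = mon c a x := by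
  simp only [mon, lowerCoeffs, Pi.sub_apply, indicator_of_notMem ha, sub_zero]

theorem inter_active_subset_active_lowerCoeffs (ht : 0 ≤ t) :
    S ∩ active c p ⊆ active (lowerCoeffs c S t) p := by
  rintro a ⟨haS, ha⟩ b
  rw [mon_lowerCoeffs_of_mem haS]
  by_cases hb : b ∈ S
  · rw [mon_lowerCoeffs_of_mem hb]
    exact sub_le_sub_right (ha b) t
  · rw [mon_lowerCoeffs_of_notMem hb]
    exact (sub_le_self _ ht).trans (ha b)

theorem active_subset_active_lowerCoeffs (hS : Disjoint S (active c p))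
    (ht : ∀ a ∈ active c p, ∀ b ∉ active c p, mon c a p + t ≤ mon c b p) :
    active c p ⊆ active (lowerCoeffs c S t) p := by
  intro a ha b
  rw [mon_lowerCoeffs_of_notMem (hS.notMem_of_mem_right ha)]
  by_cases hb : b ∈ S
  · rw [mon_lowerCoeffs_of_mem hb]
    exact le_sub_right_of_add_le (ht a ha b (hS.notMem_of_mem_left hb))
  · rw [mon_lowerCoeffs_of_notMem hb]
    exact ha b

end lowerCoeffs

/-- Otherwise all the coefficients in `S` could be lowered by a small common amount. -/
theorem exists_existsUnique_mem_active (hΩ : IsCompact Ω) {P : Finset (ℝ × ℝ)}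
    (hP : ↑P ⊆ interior Ω) (hc : IsLeast (admissibleCoeffs Ω P) c) {S : Finset (ℤ × ℤ)}
    (hS : S.Nonempty) (hraised : ∀ a ∈ S, supportCoeff Ω a < c a) :
    ∃ p ∈ P, ∃! a, a ∈ S ∧ a ∈ active c p := by
  by_contra! hcon
  have hroom : ∀ᶠ t in 𝓝[>] (0 : ℝ), ∀ a ∈ S, t ≤ c a - supportCoeff Ω a :=
    (Finset.eventually_all S).2 fun a ha ↦
      (eventually_le_nhds (sub_pos.2 (hraised a ha))).filter_mono nhdsWithin_le_nhds
  have hgap : ∀ᶠ t in 𝓝[>] (0 : ℝ), ∀ p ∈ P,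
      ∀ a ∈ active c p, ∀ b ∉ active c p, mon c a p + t ≤ mon c b p := by
    refine (Finset.eventually_all P).2 fun p hp ↦ ?_
    obtain ⟨δ, hδ, hgap⟩ := exists_pos_forall_add_le_mon hΩ hc.1.1 (hP hp)
    filter_upwards [(eventually_le_nhds hδ).filter_mono nhdsWithin_le_nhds] with t ht a ha b hb
    exact (by gcongr : mon c a p + t ≤ mon c a p + δ).trans (hgap a ha b hb)
  obtain ⟨t, hroom, hgap, ht⟩ := (hroom.and (hgap.and self_mem_nhdsWithin)).exists
  have hadm : lowerCoeffs c S t ∈ admissibleCoeffs Ω P := by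
    refine ⟨fun a ↦ ?_, fun p hp ↦ ?_⟩
    · by_cases ha : a ∈ S
      · rw [lowerCoeffs, Pi.sub_apply, indicator_of_mem (Finset.mem_coe.2 ha)]
        exact le_sub_comm.1 (hroom a ha)
      · rw [lowerCoeffs, Pi.sub_apply, indicator_of_notMem (Finset.mem_coe.not.2 ha), sub_zero]
        exact hc.1.1 a
    · obtain hdisj | ⟨a, ha⟩ := (S ∩ active c p : Set (ℤ × ℤ)).eq_empty_or_nonempty
      · exact (hc.1.2 p hp).mono
          (active_subset_active_lowerCoeffs (disjoint_iff_inter_eq_empty.2 hdisj) (hgap p hp))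
      · refine Set.Nontrivial.mono ?_ (inter_active_subset_active_lowerCoeffs (mem_Ioi.1 ht).le)
        by_contra hsub
        exact hcon p hp ⟨a, ha, fun b hb ↦ not_nontrivial_iff.1 hsub hb ha⟩
  obtain ⟨a, ha⟩ := hS
  have hle := hc.2 hadm a
  rw [lowerCoeffs, Pi.sub_apply, indicator_of_mem (Finset.mem_coe.2 ha)] at hle
  exact hle.not_gt (sub_lt_self _ ht)

/-- Remove from `S` and `T` a pair related as in the hypothesis, and induct. -/
theorem card_le_card_of_forall_exists_existsUnique {α β : Type*} {r : α → β → Prop} {S : Finset α}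
    {T : Finset β} (h : ∀ S' ⊆ S, S'.Nonempty → ∃ y ∈ T, ∃! x, x ∈ S' ∧ r x y) :
    S.card ≤ T.card := by
  classical
  induction S using Finset.strongInduction generalizing T with
  | H S ih =>
    obtain rfl | hS := S.eq_empty_or_nonempty
    · exact T.card.zero_le
    obtain ⟨y, hy, x, ⟨hx, hxy⟩, hunique⟩ := h S subset_rfl hS
    have hle : (S.erase x).card ≤ (T.erase y).card := by
      refine ih _ (Finset.erase_ssubset hx) fun S' hS' hne ↦ ?_
      obtain ⟨z, hz, w, ⟨hw, hwz⟩, hw'⟩ := h S' (hS'.trans (Finset.erase_subset x S)) hne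
      refine ⟨z, Finset.mem_erase.2 ⟨?_, hz⟩, w, ⟨hw, hwz⟩, hw'⟩
      rintro rfl
      exact Finset.ne_of_mem_erase (hS' hw) (hunique w ⟨Finset.mem_of_mem_erase (hS' hw), hwz⟩)
    rw [← Finset.card_erase_add_one hx, ← Finset.card_erase_add_one hy]
    exact Nat.succ_le_succ hle

/-- The slopes whose coefficient is not the one of the series `0_Ω`. -/
def raisedSlopes (Ω : Set (ℝ × ℝ)) (c : ℤ × ℤ → ℝ) : Set (ℤ × ℤ) :=
  {a | supportCoeff Ω a < c a}

theorem encard_raisedSlopes_le (hΩ : IsCompact Ω) {P : Finset (ℝ × ℝ)} (hP : ↑P ⊆ interior Ω)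
    (hc : IsLeast (admissibleCoeffs Ω P) c) : (raisedSlopes Ω c).encard ≤ P.card := by
  by_contra! hlt
  obtain ⟨S, hS, hcard⟩ := exists_subset_encard_eq (Order.add_one_le_of_lt hlt)
  lift S to Finset (ℤ × ℤ) using finite_of_encard_eq_coe (k := P.card + 1) (mod_cast hcard)
  rw [encard_coe_eq_coe_finsetCard] at hcard
  norm_cast at hcard
  have hle : S.card ≤ P.card := card_le_card_of_forall_exists_existsUnique
    (r := fun a p ↦ a ∈ active c p) fun S' hS' hne ↦
      exists_existsUnique_mem_active hΩ hP hc hne fun a ha ↦ hS (hS' ha)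
  lia

/-! ### Faces touching the boundary -/

/-- By compactness of the torus, the multiples of `f` return to the integer lattice. -/
theorem exists_tendsto_slopeForm_sub_smul (f : StrongDual ℝ (ℝ × ℝ)) :
    ∃ (s : ℕ → ℝ) (b : ℕ → ℤ × ℤ), Tendsto s atTop atTop ∧
      Tendsto (fun n ↦ slopeForm (b n) - s n • f) atTop (𝓝 0) := by
  let u (n : ℕ) : ℝ × ℝ := (Int.fract (n * f (1, 0)), Int.fract (n * f (0, 1)))
  have hu (n : ℕ) : u n ∈ Icc (0 : ℝ × ℝ) 1 :=
    ⟨⟨Int.fract_nonneg _, Int.fract_nonneg _⟩, (Int.fract_lt_one _).le, (Int.fract_lt_one _).le⟩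
  obtain ⟨l, -, φ, hφ, hl⟩ := isCompact_Icc.tendsto_subseq hu
  have hdouble : Tendsto (fun n : ℕ ↦ n + n) atTop atTop :=
    tendsto_id.atTop_add_atTop tendsto_id
  refine ⟨fun n ↦ φ (n + n) - φ n,
    fun n ↦ (⌊φ (n + n) * f (1, 0)⌋ - ⌊φ n * f (1, 0)⌋, ⌊φ (n + n) * f (0, 1)⌋ - ⌊φ n * f (0, 1)⌋),
    tendsto_atTop_mono (fun n ↦ ?_) tendsto_natCast_atTop_atTop, ?_⟩
  · rw [le_sub_iff_add_le]
    exact_mod_cast hφ.add_le_nat n n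
  · have hlim : Tendsto (fun n ↦ u (φ n) - u (φ (n + n))) atTop (𝓝 0) := by
      simpa using hl.sub (hl.comp hdouble)
    have hform : Tendsto (fun n ↦ (u (φ n) - u (φ (n + n))).1 • ContinuousLinearMap.fst ℝ ℝ ℝ +
        (u (φ n) - u (φ (n + n))).2 • ContinuousLinearMap.snd ℝ ℝ ℝ) atTop (𝓝 0) := by
      have hcont : Continuous fun v : ℝ × ℝ ↦ v.1 • ContinuousLinearMap.fst ℝ ℝ ℝ +
          v.2 • ContinuousLinearMap.snd ℝ ℝ ℝ := by fun_prop
      exact (hcont.tendsto' 0 0 (by simp)).comp hlim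
    refine hform.congr fun n ↦ ?_
    ext <;> simp [slopeForm, u, Int.fract, -Int.self_sub_floor] <;> ring

theorem tendsto_cofinite_of_tendsto_slopeForm_sub_smul {f : StrongDual ℝ (ℝ × ℝ)} (hf : f ≠ 0)
    {s : ℕ → ℝ} {b : ℕ → ℤ × ℤ} (hs : Tendsto s atTop atTop)
    (hb : Tendsto (fun n ↦ slopeForm (b n) - s n • f) atTop (𝓝 0)) :
    Tendsto b atTop cofinite := by
  have hnorm : Tendsto (fun n ↦ ‖slopeForm (b n)‖) atTop atTop := by
    refine tendsto_atTop_mono (fun n ↦ ?_)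
      ((hs.atTop_mul_const (norm_pos_iff.2 hf)).atTop_add hb.norm.neg)
    have hle := norm_le_norm_add_norm_sub' (s n • f) (slopeForm (b n))
    rw [norm_smul, norm_sub_rev] at hle
    linarith [mul_le_mul_of_nonneg_right (Real.le_norm_self (s n)) (norm_nonneg f)]
  refine le_cofinite_iff_eventually_ne.2 fun a ↦ eventually_map.2 ?_
  filter_upwards [hnorm.eventually_ne_atTop ‖slopeForm a‖] with n hn h
  exact hn (h ▸ rfl)

theorem frequently_mon_supportCoeff_lt (hconv : Convex ℝ Ω) (hΩ : IsCompact Ω)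
    (hint : (interior Ω).Nonempty) (hq : q ∈ frontier Ω) {ε : ℝ} (hε : 0 < ε) :
    ∃ᶠ b in cofinite, mon (supportCoeff Ω) b q < ε := by
  have hqΩ : q ∈ Ω := hΩ.isClosed.frontier_subset hq
  obtain ⟨f, hf, hfq⟩ := geometric_hahn_banach_of_nonempty_interior_point hconv hq.2 hint
  obtain ⟨s, b, hs, hb⟩ := exists_tendsto_slopeForm_sub_smul (-f)
  refine (tendsto_cofinite_of_tendsto_slopeForm_sub_smul (neg_ne_zero.2 hf) hs hb).frequently
    (Eventually.frequently ?_)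
  have hsmall : Tendsto (fun n ↦ ‖slopeForm (b n) - s n • -f‖ * Metric.diam Ω) atTop (𝓝 0) := by
    simpa using hb.norm.mul_const (Metric.diam Ω)
  filter_upwards [hsmall.eventually_lt_const hε, hs.eventually_ge_atTop 0] with n hn hsn
  obtain ⟨z, hz, hz0⟩ := exists_mon_supportCoeff_eq_zero hΩ ⟨q, hqΩ⟩ (b n)
  calc mon (supportCoeff Ω) (b n) q
      = slopeForm (b n) (q - z) := by
        rw [← add_sub_cancel z q, mon_add, hz0, zero_add, add_sub_cancel]
    _ = (slopeForm (b n) - s n • -f) (q - z) - s n * (f q - f z) := by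
        simp
    _ ≤ (slopeForm (b n) - s n • -f) (q - z) :=
        sub_le_self _ (mul_nonneg hsn (sub_nonneg.2 (hfq z hz)))
    _ ≤ ‖slopeForm (b n) - s n • -f‖ * ‖q - z‖ :=
        (Real.le_norm_self _).trans (ContinuousLinearMap.le_opNorm _ _)
    _ ≤ ‖slopeForm (b n) - s n • -f‖ * Metric.diam Ω := by
        rw [← dist_eq_norm]
        gcongr
        exact Metric.dist_le_diam_of_mem hΩ.isBounded hqΩ hz
    _ < ε := hn

theorem exists_mem_frontier_mon_supportCoeff_eq_zero (hΩ : IsCompact Ω) (hne : Ω.Nonempty)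
    (a : ℤ × ℤ) : ∃ q ∈ frontier Ω, mon (supportCoeff Ω) a q = 0 := by
  obtain ⟨z, hz, hz0⟩ := exists_mon_supportCoeff_eq_zero hΩ hne a
  by_cases hzint : z ∈ interior Ω
  · have hmin : IsLocalMin (mon (supportCoeff Ω) a) z := by
      filter_upwards [isOpen_interior.mem_nhds hzint] with x hx
      exact hz0.trans_le (mon_nonneg hΩ le_rfl (interior_subset hx))
    have hslope : slopeForm a = 0 := hmin.hasFDerivAt_eq_zero (hasFDerivAt_mon _ a z)
    obtain ⟨q, hq⟩ := nonempty_frontier_iff.2 ⟨hne, hΩ.ne_univ⟩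
    refine ⟨q, hq, ?_⟩
    rwa [mon_eq_add_slopeForm, hslope] at hz0 ⊢
  · exact ⟨z, ⟨subset_closure hz, hzint⟩, hz0⟩

section boundary

variable (hconv : Convex ℝ Ω) (hΩ : IsCompact Ω) (hc : supportCoeff Ω ≤ c)
  (hface : (face Ω c a).Nonempty)
include hconv hΩ hc hface

/-- A segment from the face to a point of `∂Ω` where the monomial vanishes stays in the face. -/
theorem not_disjoint_closure_face_frontier (ha : a ∉ raisedSlopes Ω c) :
    ¬ Disjoint (closure (face Ω c a)) (frontier Ω) := by
  obtain ⟨x, hx⟩ := hface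
  have hxΩ := interior_subset hx.1
  obtain ⟨q, hq, hq0⟩ := exists_mem_frontier_mon_supportCoeff_eq_zero hΩ ⟨x, hxΩ⟩ a
  have hactive : a ∈ active c q := fun b ↦
    ((mon_le_mon (not_lt.1 ha) q).trans_eq hq0).trans
      (mon_nonneg hΩ (hc b) (hΩ.isClosed.frontier_subset hq))
  have hsegment : openSegment ℝ x q ⊆ face Ω c a := by
    rintro y hy
    have hyint := hconv.openSegment_interior_closure_subset_interior hx.1 hq.1 hy
    obtain ⟨s, t, hs, ht, hst, rfl⟩ := hy
    exact smul_add_smul_mem_face hs ht.le hst hx hactive hyint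
  refine not_disjoint_iff.2 ⟨q, closure_mono hsegment ?_, hq⟩
  exact segment_subset_closure_openSegment (right_mem_segment ℝ x q)

/-- Near `∂Ω` a raised monomial is beaten by infinitely many arbitrarily small monomials, only
finitely many of which are raised. -/
theorem disjoint_closure_face_frontier_iff (hfin : (raisedSlopes Ω c).Finite) :
    Disjoint (closure (face Ω c a)) (frontier Ω) ↔ a ∈ raisedSlopes Ω c := by
  refine ⟨fun h ↦ ?_, fun ha ↦ disjoint_left.2 fun q hqa hq ↦ ?_⟩
  · by_contra ha
    exact not_disjoint_closure_face_frontier hconv hΩ hc hface ha h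
  · have hfreq := frequently_mon_supportCoeff_lt hconv hΩ (hface.mono (sep_subset _ _)) hq
      (sub_pos.2 ha)
    obtain ⟨b, hb, hbc⟩ := (hfreq.and_eventually hfin.eventually_cofinite_notMem).exists
    have hle : mon c a q ≤ mon c b q :=
      closure_minimal (fun x hx ↦ mem_active_of_mem_face hx b)
        (isClosed_le (continuous_mon c a) (continuous_mon c b)) hqa
    have hnonneg := mon_nonneg hΩ le_rfl (a := a) (hΩ.isClosed.frontier_subset hq)
    have hcb : c b ≤ supportCoeff Ω b := not_lt.1 hbc
    simp only [mon_eq_add_slopeForm] at hb hle hnonneg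
    linarith

end boundary

theorem IsLowerEnvelope.genus_eq (hconv : Convex ℝ Ω) (hΩ : IsCompact Ω)
    (hc : supportCoeff Ω ≤ c) (hfin : (raisedSlopes Ω c).Finite) (hf : IsLowerEnvelope Ω c f) :
    genus Ω f = {a ∈ raisedSlopes Ω c | (face Ω c a).Nonempty}.ncard := by
  have hinj : InjOn (face Ω c) {a ∈ raisedSlopes Ω c | (face Ω c a).Nonempty} := by
    rintro a ⟨-, x, hx⟩ b - hab
    exact eq_of_mem_face hx (hab ▸ hx)
  rw [genus, ← hinj.ncard_image]
  congr 1
  ext U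
  constructor
  · rintro ⟨⟨p, hp, rfl⟩, hdisj⟩
    obtain ⟨a, ha⟩ := mem_iUnion.1 (hf.interior_diff_cornerLocus hΩ hc ▸ hp)
    rw [hf.connectedComponentIn_eq_face hconv hΩ hc ha] at hdisj ⊢
    exact ⟨a, ⟨(disjoint_closure_face_frontier_iff hconv hΩ hc ⟨p, ha⟩ hfin).1
      (disjoint_iff_inter_eq_empty.2 hdisj), p, ha⟩, rfl⟩
  · rintro ⟨a, ⟨ha, p, hp⟩, rfl⟩
    refine ⟨⟨p, ?_, (hf.connectedComponentIn_eq_face hconv hΩ hc hp).symm⟩,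
      ((disjoint_closure_face_frontier_iff hconv hΩ hc ⟨p, hp⟩ hfin).2 ha).inter_eq⟩
    rw [hf.interior_diff_cornerLocus hΩ hc]
    exact mem_iUnion_of_mem a hp

theorem raisedSlopes_finite (hΩ : IsCompact Ω) {P : Finset (ℝ × ℝ)} (hP : ↑P ⊆ interior Ω)
    (hc : IsLeast (admissibleCoeffs Ω P) c) : (raisedSlopes Ω c).Finite :=
  finite_of_encard_le_coe (encard_raisedSlopes_le hΩ hP hc)

theorem genus_GP_eq (hconv : Convex ℝ Ω) (hΩ : IsCompact Ω) (hint : (interior Ω).Nonempty)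
    {P : Finset (ℝ × ℝ)} (hP : ↑P ⊆ interior Ω) (hc : IsLeast (admissibleCoeffs Ω P) c) :
    genus Ω (GP Ω P zeroFn) = {a ∈ raisedSlopes Ω c | (face Ω c a).Nonempty}.ncard :=
  (isLowerEnvelope_GP hconv hΩ hint hP hc).genus_eq hconv hΩ hc.1.1 (raisedSlopes_finite hΩ hP hc)

theorem genus_GP_le_card (hconv : Convex ℝ Ω) (hΩ : IsCompact Ω) (hint : (interior Ω).Nonempty)
    {P : Finset (ℝ × ℝ)} (hP : ↑P ⊆ interior Ω) : genus Ω (GP Ω P zeroFn) ≤ P.card := by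
  obtain ⟨c, hc⟩ := exists_isLeast_admissibleCoeffs hΩ (hint.mono interior_subset) hP
  rw [genus_GP_eq hconv hΩ hint hP hc, ← ENat.natCast_le_natCast,
    ((raisedSlopes_finite hΩ hP hc).subset (sep_subset _ _)).cast_ncard_eq]
  exact (encard_le_encard (sep_subset _ _)).trans (encard_raisedSlopes_le hΩ hP hc)

/-! ### Topological invariance of the genus -/

/-- The bounded connected components of `S`. -/
def boundedComponents {X : Type*} [PseudoMetricSpace X] (S : Set X) : Set (Set X) :=
  {V | (∃ p ∈ S, V = connectedComponentIn S p) ∧ Bornology.IsBounded V}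

section boundedComponents

variable {X : Type*} [PseudoMetricSpace X] [ProperSpace X]

theorem image_mem_boundedComponents (h : X ≃ₜ X) {S V : Set X} (hV : V ∈ boundedComponents S) :
    h '' V ∈ boundedComponents (h '' S) := by
  obtain ⟨⟨p, hp, rfl⟩, hb⟩ := hV
  refine ⟨⟨h p, mem_image_of_mem h hp, h.image_connectedComponentIn hp⟩, ?_⟩
  exact (hb.isCompact_closure.image h.continuous).isBounded.subset (image_mono subset_closure)

theorem ncard_boundedComponents_image (h : X ≃ₜ X) (S : Set X) :
    (boundedComponents (h '' S)).ncard = (boundedComponents S).ncard := by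
  refine (ncard_congr (fun V _ ↦ h '' V) (fun V ↦ image_mem_boundedComponents h)
    (fun V W _ _ hVW ↦ h.injective.image_injective hVW) fun V hV ↦ ⟨h.symm '' V, ?_, ?_⟩).symm
  · simpa [image_image] using image_mem_boundedComponents h.symm hV
  · simp [image_image]

end boundedComponents

/-- From a point outside `D`, a ray pointing away from a point of `D` never meets `D`. -/
theorem connectedComponentIn_compl_subset_of_isBounded {E : Type*} [NormedAddCommGroup E]
    [NormedSpace ℝ E] {C D : Set E} {p : E} (hD : Convex ℝ D) (hne : D.Nonempty) (hCD : C ⊆ D)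
    (hb : Bornology.IsBounded (connectedComponentIn Cᶜ p)) : connectedComponentIn Cᶜ p ⊆ D := by
  obtain ⟨o, ho⟩ := hne
  intro w hw
  by_contra hwD
  have how : o ≠ w := fun h ↦ hwD (h ▸ ho)
  have hray : AffineMap.lineMap o w '' Ici (1 : ℝ) ⊆ Cᶜ := by
    rintro _ ⟨t, ht, rfl⟩ hC
    have ht0 : 0 < t := zero_lt_one.trans_le ht
    have hback : AffineMap.lineMap o (AffineMap.lineMap o w t) t⁻¹ = w := by
      simp [AffineMap.lineMap_apply_module', smul_smul, ht0.ne']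
    exact hwD (hback ▸ hD.lineMap_mem ho (hCD hC) ⟨inv_nonneg.2 ht0.le, inv_le_one_of_one_le₀ ht⟩)
  have hsub : AffineMap.lineMap o w '' Ici (1 : ℝ) ⊆ connectedComponentIn Cᶜ p := by
    rw [connectedComponentIn_eq hw]
    exact (isPreconnected_Ici.image _ AffineMap.lineMap_continuous.continuousOn)
      |>.subset_connectedComponentIn ⟨1, self_mem_Ici, AffineMap.lineMap_apply_one o w⟩ hray
  exact not_bddAbove_Ici (1 : ℝ) (((antilipschitzWith_lineMap how).isBounded_preimage
    (hb.subset hsub)).subset (subset_preimage_image _ _)).bddAbove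

theorem closure_connectedComponentIn_inter_subset {X : Type*} [TopologicalSpace X] {T : Set X}
    {x : X} (hx : x ∈ T) :
    closure (connectedComponentIn T x) ∩ T ⊆ connectedComponentIn T x := by
  rintro y ⟨hy, hyT⟩
  exact (isPreconnected_connectedComponentIn.subset_closure (subset_insert y _)
    (insert_subset hy subset_closure)).subset_connectedComponentIn
    (mem_insert_of_mem y (mem_connectedComponentIn hx))
    (insert_subset hyT (connectedComponentIn_subset T x)) (mem_insert y _)

theorem genus_eq_ncard_boundedComponents (hconv : Convex ℝ Ω) (hΩ : IsCompact Ω)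
    (hint : (interior Ω).Nonempty) (hopen : IsOpen (interior Ω \ cornerLocus Ω f)) :
    genus Ω f = (boundedComponents (cornerLocus Ω f)ᶜ).ncard := by
  have hCint : cornerLocus Ω f ⊆ interior Ω := sep_subset _ _
  have hcompl : interior Ω \ cornerLocus Ω f ⊆ (cornerLocus Ω f)ᶜ := fun x hx ↦ hx.2
  rw [genus]
  congr 1
  ext V
  constructor
  · rintro ⟨⟨p, hp, rfl⟩, hdisj⟩
    have hsub := connectedComponentIn_subset (interior Ω \ cornerLocus Ω f) p
    refine ⟨⟨p, hp.2, (connectedComponentIn_eq_of_isOpen hopen.connectedComponentIn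
      isPreconnected_connectedComponentIn (hsub.trans hcompl) ?_
      (mem_connectedComponentIn hp)).symm⟩,
      hΩ.isBounded.subset fun x hx ↦ interior_subset (hsub hx).1⟩
    rintro x ⟨hx, hxC⟩
    refine closure_connectedComponentIn_inter_subset hp ⟨hx, ?_, hxC⟩
    by_contra hxint
    exact disjoint_left.1 (disjoint_iff_inter_eq_empty.2 hdisj) hx
      ⟨closure_mono (fun y hy ↦ interior_subset (hsub hy).1) hx, hxint⟩
  · rintro ⟨⟨p, hp, rfl⟩, hb⟩
    have hVint := connectedComponentIn_compl_subset_of_isBounded hconv.interior hint hCint hb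
    have hsub : connectedComponentIn (cornerLocus Ω f)ᶜ p ⊆ interior Ω \ cornerLocus Ω f :=
      fun x hx ↦ ⟨hVint hx, connectedComponentIn_subset _ _ hx⟩
    have hpV := mem_connectedComponentIn hp
    refine ⟨⟨p, hsub hpV, (isPreconnected_connectedComponentIn.subset_connectedComponentIn hpV
      hsub).antisymm (connectedComponentIn_mono p hcompl)⟩, ?_⟩
    rw [← disjoint_iff_inter_eq_empty, disjoint_left]
    exact fun q hq hqΩ ↦ hqΩ.2 (hVint (closure_connectedComponentIn_inter_subset hp
      ⟨hq, fun hqC ↦ hqΩ.2 (hCint hqC)⟩))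

theorem genus_GP_eq_ncard_boundedComponents (hconv : Convex ℝ Ω) (hΩ : IsCompact Ω)
    (hint : (interior Ω).Nonempty) {P : Finset (ℝ × ℝ)} (hP : ↑P ⊆ interior Ω) :
    genus Ω (GP Ω P zeroFn) = (boundedComponents (cornerLocus Ω (GP Ω P zeroFn))ᶜ).ncard := by
  obtain ⟨c, hc⟩ := exists_isLeast_admissibleCoeffs hΩ (hint.mono interior_subset) hP
  refine genus_eq_ncard_boundedComponents hconv hΩ hint ?_
  rw [(isLowerEnvelope_GP hconv hΩ hint hP hc).interior_diff_cornerLocus hΩ hc.1.1]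
  exact isOpen_iUnion (isOpen_face hΩ hc.1.1)

theorem genus_GP_eq_of_sameCombType (hconv : Convex ℝ Ω) (hΩ : IsCompact Ω)
    (hint : (interior Ω).Nonempty) {P Q : Finset (ℝ × ℝ)} (hP : ↑P ⊆ interior Ω)
    (hQ : ↑Q ⊆ interior Ω) (h : SameCombType Ω P Q) :
    genus Ω (GP Ω P zeroFn) = genus Ω (GP Ω Q zeroFn) := by
  obtain ⟨e, he, -⟩ := h
  rw [genus_GP_eq_ncard_boundedComponents hconv hΩ hint hP,
    genus_GP_eq_ncard_boundedComponents hconv hΩ hint hQ, ← he, ← image_compl_eq e.bijective,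
    ncard_boundedComponents_image]

/-! ### General position -/

section general_position

variable {ι : Type*} [Fintype ι]

/-- The points `x i` are in general position with respect to `k` if no change of fewer than
`Fintype.card ι` of the coefficients `k` makes every `x i` equalize two monomials. -/
def InGeneralPosition (k : ℤ × ℤ → ℝ) (x : ι → ℝ × ℝ) : Prop :=
  ∀ (M : Finset (ℤ × ℤ)) (β γ : ι → ℤ × ℤ) (c : ℤ × ℤ → ℝ), M.card < Fintype.card ι →
    (∀ i, β i ≠ γ i) → EqOn c k (M : Set (ℤ × ℤ))ᶜ → ¬ ∀ i, mon c (β i) (x i) = mon c (γ i) (x i)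

theorem ae_forall_apply_ne_add_of_finrank_lt {E F G : Type*} [NormedAddCommGroup E]
    [NormedSpace ℝ E] [MeasurableSpace E] [BorelSpace E] [FiniteDimensional ℝ E]
    (μ : Measure E) [μ.IsAddHaarMeasure] [AddCommGroup F] [Module ℝ F] [AddCommGroup G]
    [Module ℝ G] [FiniteDimensional ℝ G] {Φ : E →ₗ[ℝ] F} (hΦ : Function.Surjective Φ)
    (L : G →ₗ[ℝ] F) (hdim : Module.finrank ℝ G < Module.finrank ℝ F) (v : F) :
    ∀ᵐ x ∂μ, ∀ u, Φ x ≠ L u + v := by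
  let S : AffineSubspace ℝ E := (AffineSubspace.mk' v (LinearMap.range L)).comap Φ.toAffineMap
  have hS : S ≠ ⊤ := fun htop ↦ by
    have hrange : LinearMap.range L = ⊤ := eq_top_iff.2 fun w _ ↦ by
      obtain ⟨x, hx⟩ := hΦ (w + v)
      have hmem : x ∈ S := htop ▸ AffineSubspace.mem_top ℝ E x
      simpa [S, hx, AffineSubspace.mem_mk'] using hmem
    exact (L.finrank_range_le.trans_lt hdim).ne (by rw [hrange, finrank_top])
  filter_upwards [measure_eq_zero_iff_ae_notMem.1 (Measure.addHaar_affineSubspace μ S hS)]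
    with x hx u hu
  exact hx (by simp [S, hu, AffineSubspace.mem_mk'])

/-- The conditions on `x` are linear, one for each point, while only `M.card` coefficients are
free. -/
theorem ae_not_forall_mon_eq {M : Finset (ℤ × ℤ)} (hM : M.card < Fintype.card ι)
    {β γ : ι → ℤ × ℤ} (hβγ : ∀ i, β i ≠ γ i) (k : ℤ × ℤ → ℝ) :
    ∀ᵐ x : ι → ℝ × ℝ, ∀ c, EqOn c k (M : Set (ℤ × ℤ))ᶜ →
      ¬ ∀ i, mon c (β i) (x i) = mon c (γ i) (x i) := by
  let Φ : (ι → ℝ × ℝ) →ₗ[ℝ] (ι → ℝ) :=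
    LinearMap.pi fun i ↦ (slopeForm (β i) - slopeForm (γ i)).toLinearMap ∘ₗ LinearMap.proj i
  have hΦ : Function.Surjective Φ := fun w ↦ by
    have hsurj (i : ι) : ∃ z, (slopeForm (β i) - slopeForm (γ i)) z = w i :=
      LinearMap.surjective (f := (slopeForm (β i) - slopeForm (γ i)).toLinearMap)
        (by simpa [sub_eq_zero] using slopeForm_injective.ne (hβγ i)) (w i)
    choose z hz using hsurj
    exact ⟨z, funext hz⟩
  let L : (M → ℝ) →ₗ[ℝ] (ι → ℝ) := (LinearMap.funLeft ℝ ℝ γ - LinearMap.funLeft ℝ ℝ β) ∘ₗ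
    Function.ExtendByZero.linearMap ℝ ((↑) : M → ℤ × ℤ)
  filter_upwards [ae_forall_apply_ne_add_of_finrank_lt volume hΦ L (by simpa using hM)
    (k ∘ γ - k ∘ β)] with x hx c hc heq
  refine hx (fun m ↦ c m - k m) (funext fun i ↦ ?_)
  have hext (a : ℤ × ℤ) :
      Function.extend ((↑) : M → ℤ × ℤ) (fun m ↦ c m - k m) 0 a = c a - k a := by
    by_cases ha : a ∈ M
    · exact Subtype.val_injective.extend_apply _ _ (⟨a, ha⟩ : M)
    · rw [Function.extend_apply' _ _ _ (by simpa using ha), hc (by simpa using ha), sub_self,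
        Pi.zero_apply]
  have hi := heq i
  rw [mon_eq_add_slopeForm, mon_eq_add_slopeForm] at hi
  simp only [Φ, L, LinearMap.pi_apply, LinearMap.comp_apply, LinearMap.proj_apply,
    ContinuousLinearMap.coe_coe, sub_apply, LinearMap.sub_apply, Pi.add_apply, Pi.sub_apply,
    Function.comp_apply, LinearMap.funLeft_apply, Function.ExtendByZero.linearMap_apply, hext]
  linear_combination hi

theorem ae_inGeneralPosition (k : ℤ × ℤ → ℝ) : ∀ᵐ x : ι → ℝ × ℝ, InGeneralPosition k x := by
  have h : ∀ᵐ x : ι → ℝ × ℝ, ∀ d : {d : Finset (ℤ × ℤ) × (ι → ℤ × ℤ) × (ι → ℤ × ℤ) //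
      d.1.card < Fintype.card ι ∧ ∀ i, d.2.1 i ≠ d.2.2 i}, ∀ c, EqOn c k (d.1.1 : Set (ℤ × ℤ))ᶜ →
      ¬ ∀ i, mon c (d.1.2.1 i) (x i) = mon c (d.1.2.2 i) (x i) :=
    ae_all_iff.2 fun d ↦ ae_not_forall_mon_eq d.2.1 d.2.2 k
  filter_upwards [h] with x hx M β γ c hM hβγ hc
  exact hx ⟨(M, β, γ), hM, hβγ⟩ c hc

theorem slopeForm_one_sqrt_two_injective :
    Function.Injective fun a : ℤ × ℤ ↦ slopeForm a (1, √2) := by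
  intro a b hab
  simp only [slopeForm_apply, mul_one] at hab
  have hdiff : ((a.2 - b.2 : ℤ) : ℝ) * √2 = (b.1 - a.1 : ℤ) := by
    push_cast
    linear_combination hab
  have hsnd : a.2 = b.2 := by
    by_contra hne
    exact (irrational_sqrt_two.intCast_mul (sub_ne_zero.2 hne)).ne_int _ hdiff
  rw [hsnd, add_left_inj, Int.cast_inj] at hab
  exact Prod.ext hab hsnd

/-- Take the active slopes that are extreme in an irrational direction. -/
theorem exists_face_nonempty_mon_eq (hΩ : IsCompact Ω) (hc : supportCoeff Ω ≤ c)
    (hp : p ∈ interior Ω) (hact : (active c p).Nontrivial) :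
    ∃ a b, a ≠ b ∧ mon c a p = mon c b p ∧ (face Ω c a).Nonempty ∧ (face Ω c b).Nonempty := by
  have hfin := active_finite hΩ hc hp
  have hinj := slopeForm_one_sqrt_two_injective
  obtain ⟨a, ha, hmin⟩ := exists_min_image _ (fun a ↦ slopeForm a (1, √2)) hfin hact.nonempty
  obtain ⟨b, hb, hmax⟩ := exists_max_image _ (fun a ↦ slopeForm a (1, √2)) hfin hact.nonempty
  refine ⟨a, b, ?_, mon_eq_of_mem_active ha hb,
    face_nonempty_of_forall_slopeForm_lt hΩ hc hp ha fun d hd hda ↦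
      (hmin d hd).lt_of_ne (hinj.ne hda.symm),
    face_nonempty_of_forall_slopeForm_lt (v := -(1, √2)) hΩ hc hp hb fun d hd hdb ↦ ?_⟩
  · rintro rfl
    obtain ⟨d, hd, hda⟩ := hact.exists_ne a
    exact hda (hinj ((hmax d hd).antisymm (hmin d hd)))
  · rw [map_neg, map_neg, neg_lt_neg_iff]
    exact (hmax d hd).lt_of_ne (hinj.ne hdb)

/-- Every point lies on the closures of two faces, and only the raised ones among these have a
coefficient that differs from `supportCoeff Ω`. -/
theorem InGeneralPosition.card_le_ncard {x : ι → ℝ × ℝ} (hx : InGeneralPosition (supportCoeff Ω) x)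
    (hΩ : IsCompact Ω) (hxΩ : ∀ i, x i ∈ interior Ω) (hc : supportCoeff Ω ≤ c)
    (hfin : (raisedSlopes Ω c).Finite) (hact : ∀ i, (active c (x i)).Nontrivial) :
    Fintype.card ι ≤ {a ∈ raisedSlopes Ω c | (face Ω c a).Nonempty}.ncard := by
  classical
  set M := {a ∈ raisedSlopes Ω c | (face Ω c a).Nonempty}
  have hM : M.Finite := hfin.subset (sep_subset _ _)
  choose β γ hβγ heq hβ hγ using fun i ↦
    exists_face_nonempty_mon_eq hΩ hc (hxΩ i) (hact i)
  have hpiecewise {a : ℤ × ℤ} (ha : (face Ω c a).Nonempty) (y : ℝ × ℝ) :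
      mon (M.piecewise c (supportCoeff Ω)) a y = mon c a y := by
    have hcoeff : M.piecewise c (supportCoeff Ω) a = c a := by
      by_cases haM : a ∈ M
      · exact piecewise_eq_of_mem M _ _ haM
      · rw [piecewise_eq_of_notMem M _ _ haM]
        exact (hc a).eq_of_not_lt fun hlt ↦ haM ⟨hlt, ha⟩
    rw [mon, mon, hcoeff]
  by_contra! hlt
  refine hx hM.toFinset β γ (M.piecewise c (supportCoeff Ω))
    (by rwa [← ncard_eq_toFinset_card M hM]) hβγ ?_
    fun i ↦ by rw [hpiecewise (hβ i), hpiecewise (hγ i), heq i]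
  rw [hM.coe_toFinset]
  exact piecewise_eqOn_compl M _ _

theorem InGeneralPosition.card_le_genus [DecidableEq (ℝ × ℝ)] {x : ι → ℝ × ℝ}
    (hx : InGeneralPosition (supportCoeff Ω) x) (hconv : Convex ℝ Ω) (hΩ : IsCompact Ω)
    (hint : (interior Ω).Nonempty) (hxΩ : ∀ i, x i ∈ interior Ω) :
    Fintype.card ι ≤ genus Ω (GP Ω (Finset.univ.image x) zeroFn) := by
  have hsub : ↑(Finset.univ.image x) ⊆ interior Ω := by
    simpa [range_subset_iff] using hxΩ
  obtain ⟨c, hc⟩ := exists_isLeast_admissibleCoeffs hΩ (hint.mono interior_subset) hsub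
  rw [genus_GP_eq hconv hΩ hint hsub hc]
  exact hx.card_le_ncard hΩ hxΩ hc.1.1 (raisedSlopes_finite hΩ hsub hc) fun i ↦ hc.1.2 _ (by simp)

end general_position

theorem exists_inGeneralPosition_sameCombType [DecidableEq (ℝ × ℝ)] {P : Finset (ℝ × ℝ)}
    (hP : ↑P ⊆ interior Ω) (hgen : GenericPts Ω P) (k : ℤ × ℤ → ℝ) :
    ∃ x : P → ℝ × ℝ, InGeneralPosition k x ∧ (∀ i, x i ∈ interior Ω) ∧
      SameCombType Ω P (Finset.univ.image x) := by
  obtain ⟨ε, hε, hgen⟩ := hgen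
  have hnear : ∀ᶠ x in 𝓝 ((↑) : P → ℝ × ℝ), ∀ i : P, dist (i : ℝ × ℝ) (x i) < ε ∧
      x i ∈ interior Ω := eventually_all.2 fun i ↦ by
    have hi := (continuous_apply (A := fun _ : P ↦ ℝ × ℝ) i).tendsto ((↑) : P → ℝ × ℝ)
    filter_upwards [hi.eventually (Metric.ball_mem_nhds _ hε),
      hi.eventually (isOpen_interior.mem_nhds (hP i.2))] with x hx hxΩ
    exact ⟨by rwa [dist_comm], hxΩ⟩
  obtain ⟨x, hx, hxnear⟩ :=
    (Measure.dense_of_ae (ae_inGeneralPosition k)).inter_nhds_nonempty hnear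
  let g := Function.extend ((↑) : P → ℝ × ℝ) x id
  have hg : g ∘ (↑) = x := Function.extend_comp Subtype.val_injective x id
  have hcomb := hgen g fun p hp ↦ by
    simpa only [← hg, Function.comp_apply] using (hxnear ⟨p, hp⟩).1
  refine ⟨x, hx, fun i ↦ (hxnear i).2, ?_⟩
  rw [← hg, ← Finset.image_image, Finset.univ_eq_attach, Finset.attach_image_val]
  convert hcomb

end OmegaTropical

open OmegaTropical

/-- If `P` is a generic collection of `n` points in `Ω°`, then the genus of
the `Ω`-tropical curve `C(G_P 0_Ω)` equals `n`. -/
theorem genus_eq_card (Ω : Set (ℝ × ℝ)) (hconv : Convex ℝ Ω)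
    (hcomp : IsCompact Ω) (P : Finset (ℝ × ℝ)) (hP : ↑P ⊆ interior Ω)
    (hgen : GenericPts Ω P) :
    genus Ω (GP Ω ↑P zeroFn) = P.card := by
  classical
  rcases (interior Ω).eq_empty_or_nonempty with hempty | hint
  · have hP₀ : P = ∅ := Finset.coe_eq_empty.1 (subset_eq_empty hP hempty)
    simp [hP₀, genus, hempty]
  refine (genus_GP_le_card hconv hcomp hint hP).antisymm ?_
  obtain ⟨x, hx, hxΩ, hcomb⟩ := exists_inGeneralPosition_sameCombType hP hgen (supportCoeff Ω)
  have hxΩ' : ↑(Finset.univ.image x) ⊆ interior Ω := by simpa [range_subset_iff] using hxΩ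
  calc P.card = Fintype.card P := (Fintype.card_coe P).symm
    _ ≤ genus Ω (GP Ω (Finset.univ.image x) zeroFn) := hx.card_le_genus hconv hcomp hint hxΩ
    _ = genus Ω (GP Ω P zeroFn) := (genus_GP_eq_of_sameCombType hconv hcomp hint hP hxΩ' hcomb).symm
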